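/- Let T₀(r) = √(tanh r) for r > 0. Then T₀(r) ∼ r^{1/2} ⟨r⟩^{-1/2} for all r > 0, and for every integer j ≥ 1 there is a constant C_j such that |T₀^{(j)}(r)| ≤ C_j r^{1/2 − j} ⟨r⟩^{j − 1/2} e^{-2r} for all r > 0. -/

import Mathlib

noncomputable section

open Real

/-- Japanese bracket `⟨x⟩ = (1+|x|²)^{1/2}`. -/
def jap (x : ℝ) : ℝ := Real.sqrt (1 + x ^ 2)

/-- The symbol `m_β(r) = √(r(1+βr²)tanh r)`. -/
def mSymb (β r : ℝ) : ℝ := Real.sqrt (r * (1 + β * r ^ 2) * Real.tanh r)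

open Polynomial Set

/-!
The function `tanh` solves the autonomous equation `f' = Q(f)` with `Q = 1 - X ^ 2`. For any such
`f`, differentiating `f ^ s` again and again only produces functions `f ^ (s - k) * P(f)` with `P`
a polynomial, and `Q` divides `P` as soon as `k ≠ 0`. As `tanh` is bounded, so is the cofactor of
`Q(tanh)`, while `Q(tanh) = cosh ^ (-2)` accounts for the exponential decay. Finally
`tanh r ∼ r / ⟨r⟩`, and comparability of positive functions passes to all real powers.
-/

section Autonomous

variable {f : ℝ → ℝ} {U : Set ℝ} {Q : ℝ[X]}

theorem hasDerivAt_rpow_mul_eval {x : ℝ} (hf : HasDerivAt f (Q.eval (f x)) x) (hx : f x ≠ 0)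
    (a : ℝ) (P : ℝ[X]) :
    HasDerivAt (fun y => f y ^ a * P.eval (f y))
      (f x ^ (a - 1) * (Q * (C a * P + X * derivative P)).eval (f x)) x := by
  have hpow : f x ^ a = f x ^ (a - 1) * f x := by
    rw [rpow_sub_one hx, div_mul_cancel₀ _ hx]
  refine ((hf.rpow_const (p := a) (Or.inl hx)).fun_mul
    ((P.hasDerivAt (f x)).comp x hf)).congr_deriv ?_
  simp only [Function.comp_apply, eval_mul, eval_add, eval_C, eval_X, hpow]
  ring

/-- If `f' = Q(f)` and `f` has no zeros, the `k`-th derivative of `f ^ s` is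
`f ^ (s - k) * P(f)`, where `P` is the polynomial `rpowDerivPoly Q s k`. -/
def rpowDerivPoly (Q : ℝ[X]) (s : ℝ) : ℕ → ℝ[X]
  | 0 => 1
  | k + 1 => Q * (C (s - k) * rpowDerivPoly Q s k + X * derivative (rpowDerivPoly Q s k))

theorem dvd_rpowDerivPoly (Q : ℝ[X]) (s : ℝ) {k : ℕ} (hk : k ≠ 0) : Q ∣ rpowDerivPoly Q s k := by
  obtain ⟨k, rfl⟩ := Nat.exists_eq_succ_of_ne_zero hk
  exact dvd_mul_right _ _

theorem eqOn_iteratedDeriv_rpow (hU : IsOpen U) (hf : ∀ x ∈ U, HasDerivAt f (Q.eval (f x)) x)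
    (hf₀ : ∀ x ∈ U, f x ≠ 0) (s : ℝ) (k : ℕ) :
    EqOn (iteratedDeriv k fun x => f x ^ s)
      (fun x => f x ^ (s - k) * (rpowDerivPoly Q s k).eval (f x)) U := by
  induction k with
  | zero => intro x _; simp [rpowDerivPoly]
  | succ k ih =>
    intro x hx
    rw [iteratedDeriv_succ, (ih.eventuallyEq_of_mem (hU.mem_nhds hx)).deriv_eq,
      (hasDerivAt_rpow_mul_eval (hf x hx) (hf₀ x hx) _ _).deriv, Nat.cast_succ, ← sub_sub]
    rfl

theorem exists_abs_iteratedDeriv_rpow_le {K : Set ℝ} (hU : IsOpen U)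
    (hf : ∀ x ∈ U, HasDerivAt f (Q.eval (f x)) x) (hf_pos : ∀ x ∈ U, 0 < f x) (hK : IsCompact K)
    (hfK : MapsTo f U K) (s : ℝ) {k : ℕ} (hk : k ≠ 0) :
    ∃ M > 0, ∀ x ∈ U,
      |iteratedDeriv k (fun y => f y ^ s) x| ≤ M * (f x ^ (s - k) * |Q.eval (f x)|) := by
  obtain ⟨R, hR⟩ := dvd_rpowDerivPoly Q s hk
  obtain ⟨M, hM_pos, hM⟩ := (hK.image R.continuous).isBounded.exists_pos_norm_le
  refine ⟨M, hM_pos, fun x hx => ?_⟩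
  have hpow : 0 < f x ^ (s - k) := rpow_pos_of_pos (hf_pos x hx) _
  have hRM : |R.eval (f x)| ≤ M := hM _ (mem_image_of_mem _ (hfK hx))
  calc |iteratedDeriv k (fun y => f y ^ s) x|
      = |R.eval (f x)| * (f x ^ (s - k) * |Q.eval (f x)|) := by
        rw [eqOn_iteratedDeriv_rpow hU hf (fun y hy => (hf_pos y hy).ne') s k hx]
        simp only [hR, eval_mul, abs_mul, abs_of_pos hpow]
        ring
    _ ≤ M * (f x ^ (s - k) * |Q.eval (f x)|) := by gcongr

end Autonomous

section Tanh

theorem one_sub_tanh_sq (r : ℝ) : 1 - tanh r ^ 2 = 1 / cosh r ^ 2 := by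
  rw [tanh_eq_sinh_div_cosh, div_pow, one_sub_div (by positivity), cosh_sq']
  ring

theorem hasDerivAt_tanh (r : ℝ) : HasDerivAt tanh (1 - tanh r ^ 2) r := by
  have h := (hasDerivAt_sinh r).fun_div (hasDerivAt_cosh r) (cosh_pos r).ne'
  simp only [← tanh_eq_sinh_div_cosh] at h
  refine h.congr_deriv ?_
  rw [one_sub_tanh_sq, ← cosh_sq_sub_sinh_sq r, sq, sq (sinh r)]

theorem strictMono_tanh : StrictMono tanh :=
  strictMono_of_deriv_pos fun r => by
    rw [(hasDerivAt_tanh r).deriv]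
    exact sub_pos.2 (tanh_sq_lt_one r)

theorem tanh_pos {r : ℝ} (hr : 0 < r) : 0 < tanh r :=
  tanh_zero ▸ strictMono_tanh hr

theorem tanh_le_self {r : ℝ} (hr : 0 ≤ r) : tanh r ≤ r := by
  have hderiv (x : ℝ) : deriv tanh x ≤ 1 := by
    rw [(hasDerivAt_tanh x).deriv]
    exact sub_le_self 1 (sq_nonneg _)
  simpa only [tanh_zero, sub_zero, one_mul] using
    image_sub_le_mul_sub_of_deriv_le (fun x => (hasDerivAt_tanh x).differentiableAt) hderiv hr

theorem one_sub_tanh_sq_le (r : ℝ) : 1 - tanh r ^ 2 ≤ 4 * exp (-2 * r) := by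
  have hcosh : exp r / 2 ≤ cosh r := by rw [cosh_eq]; linarith [exp_pos (-r)]
  calc 1 - tanh r ^ 2 = 1 / cosh r ^ 2 := one_sub_tanh_sq r
    _ ≤ 1 / (exp r / 2) ^ 2 := by gcongr
    _ = 4 * exp (-2 * r) := by
      rw [neg_mul, exp_neg, two_mul, exp_add]
      field_simp
      norm_num

theorem exists_abs_iteratedDeriv_tanh_rpow_le (s : ℝ) {k : ℕ} (hk : k ≠ 0) :
    ∃ M > 0, ∀ r > 0,
      |iteratedDeriv k (fun x => tanh x ^ s) r| ≤ M * (tanh r ^ (s - k) * exp (-2 * r)) := by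
  have hQ (r : ℝ) : (1 - X ^ 2 : ℝ[X]).eval (tanh r) = 1 - tanh r ^ 2 := by simp
  obtain ⟨M, hM_pos, hM⟩ := exists_abs_iteratedDeriv_rpow_le isOpen_Ioi
    (fun r _ => (hQ r).symm ▸ hasDerivAt_tanh r) (fun _ => tanh_pos) isCompact_Icc
    (fun r hr => ⟨(tanh_pos hr).le, (tanh_lt_one r).le⟩) s hk
  refine ⟨4 * M, by positivity, fun r hr => ?_⟩
  have hpow : 0 < tanh r ^ (s - k) := rpow_pos_of_pos (tanh_pos hr) _
  have hsub : 0 < 1 - tanh r ^ 2 := sub_pos.2 (tanh_sq_lt_one r)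
  calc |iteratedDeriv k (fun x => tanh x ^ s) r|
      ≤ M * (tanh r ^ (s - k) * (1 - tanh r ^ 2)) := by
        simpa only [hQ, abs_of_pos hsub] using hM r hr
    _ ≤ M * (tanh r ^ (s - k) * (4 * exp (-2 * r))) := by gcongr; exact one_sub_tanh_sq_le r
    _ = 4 * M * (tanh r ^ (s - k) * exp (-2 * r)) := by ring

end Tanh

section Comparison

theorem jap_pos (x : ℝ) : 0 < jap x := sqrt_pos.2 (by positivity)

theorem jap_le_one_add_abs (x : ℝ) : jap x ≤ 1 + |x| := by
  simpa only [jap, norm_eq_abs, sq_abs] using sqrt_one_add_norm_sq_le x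

theorem div_jap_rpow {x : ℝ} (hx : 0 ≤ x) (a : ℝ) : (x / jap x) ^ a = x ^ a * jap x ^ (-a) := by
  rw [div_rpow hx (jap_pos x).le, rpow_neg (jap_pos x).le, div_eq_mul_inv]

theorem div_jap_le_tanh {r : ℝ} (hr : 0 ≤ r) : r / jap r ≤ tanh r := by
  rw [jap, ← tanh_arsinh]
  refine strictMono_tanh.monotone ?_
  rw [← sinh_le_sinh, sinh_arsinh]
  exact self_le_sinh_iff.2 hr

theorem tanh_le_two_mul_div_jap {r : ℝ} (hr : 0 ≤ r) : tanh r ≤ 2 * (r / jap r) := by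
  have htanh : 0 ≤ tanh r := tanh_zero ▸ strictMono_tanh.monotone hr
  rw [← mul_div_assoc, le_div_iff₀ (jap_pos r)]
  calc tanh r * jap r ≤ tanh r * (1 + r) := by
        gcongr
        simpa only [abs_of_nonneg hr] using jap_le_one_add_abs r
    _ = tanh r + tanh r * r := by ring
    _ ≤ r + 1 * r := by
        gcongr
        exacts [tanh_le_self hr, (tanh_lt_one r).le]
    _ = 2 * r := by ring

theorem rpow_le_rpow_abs_mul_rpow {x y c : ℝ} (hx : 0 < x) (hy : 0 < y) (hxy : x ≤ c * y)
    (hyx : y ≤ c * x) (a : ℝ) : x ^ a ≤ c ^ |a| * y ^ a := by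
  have hc : 0 < c := pos_of_mul_pos_left (hx.trans_le hxy) hy.le
  rcases le_total 0 a with ha | ha
  · rw [abs_of_nonneg ha, ← mul_rpow hc.le hy.le]
    exact rpow_le_rpow hx.le hxy ha
  · calc x ^ a = c ^ (-a) * (c * x) ^ a := by
          rw [mul_rpow hc.le hx.le, ← mul_assoc, ← rpow_add hc, neg_add_cancel, rpow_zero, one_mul]
      _ ≤ c ^ |a| * y ^ a := by
          rw [abs_of_nonpos ha]
          gcongr ?_ * ?_
          exact rpow_le_rpow_of_nonpos hy hyx ha

theorem tanh_rpow_bounds {r : ℝ} (hr : 0 < r) (a : ℝ) :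
    r ^ a * jap r ^ (-a) ≤ 2 ^ |a| * tanh r ^ a ∧
      tanh r ^ a ≤ 2 ^ |a| * (r ^ a * jap r ^ (-a)) := by
  have hdiv : 0 < r / jap r := div_pos hr (jap_pos r)
  have hle : r / jap r ≤ 2 * tanh r := by linarith [div_jap_le_tanh hr.le, tanh_pos hr]
  have hge : tanh r ≤ 2 * (r / jap r) := tanh_le_two_mul_div_jap hr.le
  rw [← div_jap_rpow hr.le]
  exact ⟨rpow_le_rpow_abs_mul_rpow hdiv (tanh_pos hr) hle hge a,
    rpow_le_rpow_abs_mul_rpow (tanh_pos hr) hdiv hge hle a⟩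

end Comparison

theorem sqrt_tanh_bounds_general (s : ℝ) :
    (∃ c₁ > (0 : ℝ), ∃ c₂ > (0 : ℝ), ∀ r : ℝ, 0 < r →
      c₁ * (r ^ s * jap r ^ (-s)) ≤ tanh r ^ s ∧ tanh r ^ s ≤ c₂ * (r ^ s * jap r ^ (-s))) ∧
    ∀ j : ℕ, 1 ≤ j → ∃ C > (0 : ℝ), ∀ r : ℝ, 0 < r →
      |iteratedDeriv j (fun x => tanh x ^ s) r| ≤
        C * (r ^ (s - j) * jap r ^ (j - s) * exp (-2 * r)) := by
  refine ⟨⟨(2 ^ |s|)⁻¹, by positivity, 2 ^ |s|, by positivity, fun r hr => ?_⟩, fun j hj => ?_⟩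
  · rw [inv_mul_le_iff₀ (by positivity)]
    exact tanh_rpow_bounds hr s
  · obtain ⟨M, hM_pos, hM⟩ :=
      exists_abs_iteratedDeriv_tanh_rpow_le s (Nat.one_le_iff_ne_zero.1 hj)
    refine ⟨M * 2 ^ |s - j|, by positivity, fun r hr => ?_⟩
    calc |iteratedDeriv j (fun x => tanh x ^ s) r|
        ≤ M * (tanh r ^ (s - j) * exp (-2 * r)) := hM r hr
      _ ≤ M * (2 ^ |s - j| * (r ^ (s - j) * jap r ^ (-(s - j))) * exp (-2 * r)) := by
          gcongr
          exact (tanh_rpow_bounds hr _).2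
      _ = M * 2 ^ |s - j| * (r ^ (s - j) * jap r ^ (j - s) * exp (-2 * r)) := by
          rw [neg_sub]
          ring

/-- For `T₀(r) = √(tanh r)`: `T₀(r) ∼ r^{1/2} ⟨r⟩^{-1/2}` for `r > 0`, and for every
`j ≥ 1`, `|T₀^{(j)}(r)| ≤ C_j r^{1/2-j} ⟨r⟩^{j-1/2} e^{-2r}` for all `r > 0`. -/
theorem sqrt_tanh_bounds :
    (∃ c₁ > (0 : ℝ), ∃ c₂ > (0 : ℝ), ∀ r : ℝ, 0 < r →
      c₁ * (r ^ ((1 : ℝ) / 2) * jap r ^ (-(1 : ℝ) / 2)) ≤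
        Real.sqrt (Real.tanh r) ∧
      Real.sqrt (Real.tanh r) ≤
        c₂ * (r ^ ((1 : ℝ) / 2) * jap r ^ (-(1 : ℝ) / 2))) ∧
    ∀ j : ℕ, 1 ≤ j → ∃ C > (0 : ℝ), ∀ r : ℝ, 0 < r →
      |iteratedDeriv j (fun x => Real.sqrt (Real.tanh x)) r| ≤
        C * (r ^ ((1 : ℝ) / 2 - j) * jap r ^ ((j : ℝ) - 1 / 2) * Real.exp (-2 * r)) := by
  simpa only [sqrt_eq_rpow, neg_div] using sqrt_tanh_bounds_general (1 / 2)
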